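/- Suppose ‖T_i‖ < 1/2 for all 1 ≤ i ≤ m and Σ_{i=1}^m α_d(T_i)^d |det(T_i)| > 1. Then for Lebesgue-almost every a = (a_1,…,a_m) ∈ ℝ^{md}, the self-affine set K^a has non-empty interior. -/

import Mathlib

open MeasureTheory

noncomputable section

namespace SelfAffine

variable {d m : ℕ}

/-- Euclidean operator norm of a `d × d` real matrix. -/
def opNorm (A : Matrix (Fin d) (Fin d) ℝ) : ℝ :=
  ‖Matrix.toEuclideanCLM (𝕜 := ℝ) A‖

/-- smallest singular value of an invertible matrix, via `α_d(A) = ‖A⁻¹‖⁻¹`. -/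
def alphaMin (A : Matrix (Fin d) (Fin d) ℝ) : ℝ := (opNorm A⁻¹)⁻¹

/-- `T_I = T_{i_1} ⋯ T_{i_n}` for a finite word `I ∈ Σ_n`. -/
def wordProd (T : Fin m → Matrix (Fin d) (Fin d) ℝ) {n : ℕ} (I : Fin n → Fin m) :
    Matrix (Fin d) (Fin d) ℝ :=
  (List.ofFn fun k => T (I k)).prod

/-- the coding map `π^a : Σ → ℝ^d`, `π^a(x) = ∑_{n ≥ 0} T_{x|n} a_{x_{n+1}}`. -/
def codingMap (T : Fin m → Matrix (Fin d) (Fin d) ℝ)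
    (a : Fin m → EuclideanSpace ℝ (Fin d)) (x : ℕ → Fin m) : EuclideanSpace ℝ (Fin d) :=
  ∑' n : ℕ, Matrix.toEuclideanCLM (𝕜 := ℝ) (wordProd T fun k : Fin n => x (k : ℕ)) (a (x n))

/-- the self-affine set `K^a = π^a(Σ)`. -/
def attractor (T : Fin m → Matrix (Fin d) (Fin d) ℝ)
    (a : Fin m → EuclideanSpace ℝ (Fin d)) : Set (EuclideanSpace ℝ (Fin d)) :=
  Set.range (codingMap T a)

section Helpers
open scoped FourierTransform ContDiff SchwartzMap


section
variable {E : Type*} [NormedAddCommGroup E] [InnerProductSpace ℝ E] [CompleteSpace E] {m : ℕ}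
  {V : Type*} [NormedAddCommGroup V] [InnerProductSpace ℝ V]

/-- product of operators along a word -/
noncomputable def wpL (L : Fin m → E →L[ℝ] E) (l : List (Fin m)) : E →L[ℝ] E := (l.map L).prod

/-- prefix of an infinite word -/
def pre (x : ℕ → Fin m) (n : ℕ) : List (Fin m) := List.ofFn fun k : Fin n => x k

theorem pre_length (x : ℕ → Fin m) (n : ℕ) : (pre x n).length = n := by simp [pre]

theorem pre_succ (x : ℕ → Fin m) (n : ℕ) : pre x (n+1) = x 0 :: pre (fun k => x (k+1)) n := by
  simp [pre, List.ofFn_succ]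

theorem wpL_cons (L : Fin m → E →L[ℝ] E) (i : Fin m) (l : List (Fin m)) :
    wpL L (i :: l) = L i ∘L wpL L l := by
  simp [wpL]; rfl

theorem wpL_nil (L : Fin m → E →L[ℝ] E) : wpL L [] = ContinuousLinearMap.id ℝ E := rfl

theorem norm_wpL_le {L : Fin m → E →L[ℝ] E} {ρ : ℝ} (hρ : ∀ i, ‖L i‖ ≤ ρ) (l : List (Fin m)) :
    ‖wpL L l‖ ≤ ρ ^ l.length := by
  induction l with
  | nil => simpa [wpL_nil] using ContinuousLinearMap.norm_id_le
  | cons i l ih =>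
    rw [wpL_cons, List.length_cons, pow_succ']
    exact (ContinuousLinearMap.opNorm_comp_le _ _).trans
      (mul_le_mul (hρ i) ih (norm_nonneg _) ((norm_nonneg _).trans (hρ i)))

/-- the coding map as an operator on the translation vectors -/
noncomputable def codeTerm (L : Fin m → E →L[ℝ] E) (P : Fin m → V →L[ℝ] E) (x : ℕ → Fin m) (n : ℕ) :
    V →L[ℝ] E :=
  wpL L (pre x n) ∘L P (x n)

noncomputable def codeOp (L : Fin m → E →L[ℝ] E) (P : Fin m → V →L[ℝ] E) (x : ℕ → Fin m) :
    V →L[ℝ] E := ∑' n, codeTerm L P x n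

theorem norm_codeTerm_le {L : Fin m → E →L[ℝ] E} {ρ : ℝ} (hρ : ∀ i, ‖L i‖ ≤ ρ)
    {P : Fin m → V →L[ℝ] E} (hP : ∀ i, ‖P i‖ ≤ 1)
    (x : ℕ → Fin m) (n : ℕ) : ‖codeTerm L P x n‖ ≤ ρ ^ n := by
  refine (ContinuousLinearMap.opNorm_comp_le _ _).trans ?_
  have h1 := norm_wpL_le hρ (pre x n)
  rw [pre_length] at h1
  calc _ ≤ ρ ^ n * 1 := mul_le_mul h1 (hP _) (norm_nonneg _) ((norm_nonneg _).trans h1)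
    _ = _ := mul_one _

theorem summable_codeTerm {L : Fin m → E →L[ℝ] E} {ρ : ℝ} (hρ : ∀ i, ‖L i‖ ≤ ρ)
    {P : Fin m → V →L[ℝ] E} (hP : ∀ i, ‖P i‖ ≤ 1) (h0 : 0 ≤ ρ)
    (h1 : ρ < 1) (x : ℕ → Fin m) : Summable (codeTerm L P x) :=
  Summable.of_norm_bounded (summable_geometric_of_lt_one h0 h1) (norm_codeTerm_le hρ hP x)

theorem codeOp_apply {L : Fin m → E →L[ℝ] E} {ρ : ℝ} (hρ : ∀ i, ‖L i‖ ≤ ρ)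
    {P : Fin m → V →L[ℝ] E} (hP : ∀ i, ‖P i‖ ≤ 1) (h0 : 0 ≤ ρ)
    (h1 : ρ < 1) (x : ℕ → Fin m) (v : V) :
    HasSum (fun n => wpL L (pre x n) (P (x n) v)) (codeOp L P x v) :=
  ((summable_codeTerm hρ hP h0 h1 x).hasSum).mapL (ContinuousLinearMap.apply ℝ E v)

theorem continuous_codeOp {L : Fin m → E →L[ℝ] E} {ρ : ℝ} (hρ : ∀ i, ‖L i‖ ≤ ρ)
    {P : Fin m → V →L[ℝ] E} (hP : ∀ i, ‖P i‖ ≤ 1) (h0 : 0 ≤ ρ)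
    (h1 : ρ < 1) : Continuous (codeOp L P) := by
  refine continuous_tsum (fun n => ?_) (summable_geometric_of_lt_one h0 h1)
    (fun n x => norm_codeTerm_le hρ hP x n)
  have : (fun x => codeTerm L P x n) = (fun w : (Fin (n+1) → Fin m) =>
      wpL L (List.ofFn fun k : Fin n => w k.castSucc) ∘L
        P (w (Fin.last n))) ∘ (fun x k => x k) := by
    ext x; simp [codeTerm, pre]
  rw [this]
  exact continuous_of_discreteTopology.comp (by fun_prop)

theorem codeOp_cons {L : Fin m → E →L[ℝ] E} {ρ : ℝ} (hρ : ∀ i, ‖L i‖ ≤ ρ)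
    {P : Fin m → V →L[ℝ] E} (hP : ∀ i, ‖P i‖ ≤ 1) (h0 : 0 ≤ ρ)
    (h1 : ρ < 1) (x : ℕ → Fin m) (v : V) :
    codeOp L P x v = P (x 0) v + L (x 0) (codeOp L P (fun k => x (k+1)) v) := by
  have h := codeOp_apply hρ hP h0 h1 x v
  have h' := (codeOp_apply hρ hP h0 h1 (fun k => x (k+1)) v).mapL (L (x 0))
  refine h.unique ?_
  rw [← hasSum_nat_add_iff' 1]
  simp only [pre_succ, wpL_cons]
  simpa [pre, wpL_nil] using! h'

theorem codeOp_sub {L : Fin m → E →L[ℝ] E} {ρ : ℝ} (hρ : ∀ i, ‖L i‖ ≤ ρ)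
    {P : Fin m → V →L[ℝ] E} (hP : ∀ i, ‖P i‖ ≤ 1) (h0 : 0 ≤ ρ)
    (h1 : ρ < 1) (n : ℕ) : ∀ (x y : ℕ → Fin m), (∀ k < n, x k = y k) →
    codeOp L P x - codeOp L P y = wpL L (pre x n) ∘L
      (codeOp L P (fun k => x (k+n)) - codeOp L P (fun k => y (k+n))) := by
  induction n with
  | zero => intro x y _; ext v; simp [pre, wpL_nil]
  | succ n ih =>
    intro x y hxy
    have := ih (fun k => x (k+1)) (fun k => y (k+1)) (fun k hk => hxy _ (by omega))
    rw [pre_succ, wpL_cons, ContinuousLinearMap.comp_assoc]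
    have e : ∀ z : ℕ → Fin m, (fun k => z (k + (n+1))) = fun k => z (k + n + 1) := fun z => rfl
    rw [e, e, ← this]
    ext1 v
    simp [codeOp_cons hρ hP h0 h1 x, codeOp_cons hρ hP h0 h1 y, hxy 0 (by omega)]

theorem norm_codeOp_apply_le {L : Fin m → E →L[ℝ] E} {ρ : ℝ} (hρ : ∀ i, ‖L i‖ ≤ ρ)
    {P : Fin m → V →L[ℝ] E} (hP : ∀ i, ‖P i‖ ≤ 1) (h0 : 0 ≤ ρ)
    (h1 : ρ < 1) (x : ℕ → Fin m) (v : V) (M : ℝ) (hM : ∀ i, ‖P i v‖ ≤ M) :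
    ‖codeOp L P x v‖ ≤ (1 - ρ)⁻¹ * M := by
  rw [← (codeOp_apply hρ hP h0 h1 x v).tsum_eq]
  refine tsum_of_norm_bounded ((hasSum_geometric_of_lt_one h0 h1).mul_right M) fun n => ?_
  have h1 := norm_wpL_le hρ (pre x n)
  rw [pre_length] at h1
  exact (ContinuousLinearMap.le_opNorm _ _).trans
    (mul_le_mul h1 (hM _) (norm_nonneg _) ((norm_nonneg _).trans h1))

theorem codeOp_lower {L : Fin m → E →L[ℝ] E} {ρ : ℝ} (hρ : ∀ i, ‖L i‖ ≤ ρ)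
    {P : Fin m → V →L[ℝ] E} (hP : ∀ i, ‖P i‖ ≤ 1) (h0 : 0 ≤ ρ)
    (h1 : ρ < 1 / 2) [CompleteSpace V]
    (hV : ∀ i j, i ≠ j → ∀ η : E, ∃ v : V, P i v = η ∧ P j v = -η ∧ (∀ k, ‖P k v‖ ≤ ‖η‖) ∧
      ‖v‖ ^ 2 = 2 * ‖η‖ ^ 2) (x y : ℕ → Fin m) (hxy : x 0 ≠ y 0) (η : E) :
    2 * ((1 - 2 * ρ) / (1 - ρ)) ^ 2 * ‖η‖ ^ 2 ≤
      ‖ContinuousLinearMap.adjoint (codeOp L P x - codeOp L P y) η‖ ^ 2 := by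
  have h1' : ρ < 1 := by linarith
  set c := (1 - 2 * ρ) / (1 - ρ) with hc
  have hcpos : 0 < c := div_pos (by linarith) (by linarith)
  obtain ⟨v, hvx, hvy, hM, hnv⟩ := hV _ _ hxy η
  have hx := norm_codeOp_apply_le hρ hP h0 h1' (fun k => x (k+1)) v _ hM
  have hy := norm_codeOp_apply_le hρ hP h0 h1' (fun k => y (k+1)) v _ hM
  set X := codeOp L P (fun k => x (k+1)) v
  set Y := codeOp L P (fun k => y (k+1)) v
  have eqn : (codeOp L P x - codeOp L P y) v = (2:ℝ) • η + (L (x 0) X - L (y 0) Y) := by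
    rw [sub_apply, codeOp_cons hρ hP h0 h1' x, codeOp_cons hρ hP h0 h1' y, hvx, hvy,
      two_smul]
    abel
  have hLX : ∀ i (Z : E), ‖Z‖ ≤ (1 - ρ)⁻¹ * ‖η‖ → ‖L i Z‖ ≤ ρ * ((1 - ρ)⁻¹ * ‖η‖) := fun i Z hZ =>
    (ContinuousLinearMap.le_opNorm _ _).trans (mul_le_mul (hρ i) hZ (norm_nonneg _) h0)
  have hR : ‖L (x 0) X - L (y 0) Y‖ ≤ 2 * (1 - c) * ‖η‖ := by
    refine (norm_sub_le _ _).trans ((add_le_add (hLX _ _ hx) (hLX _ _ hy)).trans (le_of_eq ?_))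
    have : 1 - ρ ≠ 0 := by linarith
    rw [hc]; field_simp; ring
  have hin : 2 * c * ‖η‖ ^ 2 ≤ inner ℝ η ((codeOp L P x - codeOp L P y) v) := by
    rw [eqn, inner_add_right, inner_smul_right, real_inner_self_eq_norm_sq]
    have h3 := neg_le_of_abs_le (abs_real_inner_le_norm η (L (x 0) X - L (y 0) Y))
    nlinarith [mul_le_mul_of_nonneg_left hR (norm_nonneg η)]
  rw [← ContinuousLinearMap.adjoint_inner_left] at hin
  set A := ContinuousLinearMap.adjoint (codeOp L P x - codeOp L P y) η
  have h4 := hin.trans (real_inner_le_norm A v)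
  rcases eq_or_ne η 0 with h | h
  · subst h; simp
  have hη : 0 < ‖η‖ ^ 2 := by positivity
  have h5 : (2 * c * ‖η‖ ^ 2) ^ 2 ≤ (‖A‖ * ‖v‖) ^ 2 := pow_le_pow_left₀ (by positivity) h4 2
  rw [mul_pow ‖A‖, hnv] at h5
  nlinarith
end

theorem schwartz_integral_eq {E : Type*} [NormedAddCommGroup E] [InnerProductSpace ℝ E]
    [FiniteDimensional ℝ E] [MeasurableSpace E] [BorelSpace E]
    (ν : Measure E) [IsProbabilityMeasure ν]
    (H : E → ℂ) (hH : H = VectorFourier.fourierIntegral Real.fourierChar ν (innerₗ E) (fun _ => (1:ℂ)))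
    (hHi : Integrable H) (φ : 𝓢(E, ℂ)) :
    ∫ x, φ x ∂ν = ∫ x, φ x • VectorFourier.fourierIntegral Real.fourierChar volume (-innerₗ E) H x := by
  have hc : Continuous fun p : E × E ↦ (innerₗ E) p.1 p.2 := by
    simpa using continuous_inner
  have hc' : Continuous fun p : E × E ↦ (-innerₗ E) p.1 p.2 := by
    simp only [LinearMap.neg_apply, innerₗ_apply_apply]
    fun_prop
  have hflip : (innerₗ E).flip = innerₗ E := by
    ext x y; simp [real_inner_comm]
  have h1 := VectorFourier.integral_fourierIntegral_smul_eq_flip (μ := (volume : Measure E)) (ν := ν)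
    (L := innerₗ E) (f := (𝓕⁻ φ : 𝓢(E, ℂ))) (g := fun _ => (1:ℂ)) Real.continuous_fourierChar hc
    (𝓕⁻ φ : 𝓢(E, ℂ)).integrable (integrable_const _)
  have h2 := VectorFourier.integral_fourierIntegral_smul_eq_flip (μ := (volume : Measure E))
    (ν := (volume : Measure E))
    (L := -innerₗ E) (f := φ) (g := H) Real.continuous_fourierChar hc' φ.integrable hHi
  have hflip' : (-innerₗ E).flip = -innerₗ E := by
    ext x y; simp [real_inner_comm]
  rw [hflip, ← hH] at h1
  rw [hflip'] at h2
  rw [← h2]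
  have e1 : VectorFourier.fourierIntegral Real.fourierChar volume (innerₗ E) ((𝓕⁻ φ : 𝓢(E, ℂ)) : E → ℂ)
      = φ := by
    change ((𝓕 (𝓕⁻ φ : 𝓢(E, ℂ)) : 𝓢(E, ℂ)) : E → ℂ) = φ
    simp
  have e2 : VectorFourier.fourierIntegral Real.fourierChar volume (-innerₗ E) (φ : E → ℂ)
      = (𝓕⁻ φ : 𝓢(E, ℂ)) := by
    rw [SchwartzMap.fourierInv_coe]; rfl
  rw [e1] at h1
  rw [e2, ← h1]
  simp

theorem interior_nonempty_of_integrable_charFun {E : Type*} [NormedAddCommGroup E]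
    [InnerProductSpace ℝ E]
    [FiniteDimensional ℝ E] [MeasurableSpace E] [BorelSpace E]
    (ν : Measure E) [IsProbabilityMeasure ν] (hν : Integrable (charFun ν))
    (K : Set E) (hK : IsCompact K) (hνK : ∀ᵐ x ∂ν, x ∈ K) : (interior K).Nonempty := by
  set H : E → ℂ := VectorFourier.fourierIntegral Real.fourierChar ν (innerₗ E) (fun _ => (1:ℂ)) with hH
  have hHc : H = fun t => charFun ν ((-(2 * Real.pi)) • t) := by
    ext t
    rw [hH, VectorFourier.fourierIntegral, charFun_apply]
    congr 1
    ext x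
    simp [Circle.smul_def, Real.fourierChar_apply, inner_smul_right]
  have hHi : Integrable H := by
    rw [hHc]
    exact hν.comp_smul (by simp [Real.pi_ne_zero])
  set g : E → ℂ := VectorFourier.fourierIntegral Real.fourierChar volume (-innerₗ E) H with hg
  have hc' : Continuous fun p : E × E ↦ (-innerₗ E) p.1 p.2 := by
    simp only [LinearMap.neg_apply, innerₗ_apply_apply]
    fun_prop
  have hgc : Continuous g := VectorFourier.fourierIntegral_continuous Real.continuous_fourierChar hc' hHi
  have key : ∀ f : E → ℝ, ContDiff ℝ ∞ f → HasCompactSupport f →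
      ∫ x, f x • g x = ((∫ x, f x ∂ν : ℝ) : ℂ) := by
    intro f hf hfc
    have hf' : ContDiff ℝ ∞ (fun x => (f x : ℂ)) := Complex.ofRealCLM.contDiff.comp hf
    have hfc' : HasCompactSupport (fun x => (f x : ℂ)) := hfc.comp_left (g := fun t : ℝ => (t : ℂ)) (by simp)
    have := schwartz_integral_eq ν H hH hHi (hfc'.toSchwartzMap hf')
    simp only [HasCompactSupport.toSchwartzMap_toFun] at this
    rw [← integral_complex_ofReal]
    simpa using! this.symm
  by_contra hne
  rw [Set.not_nonempty_iff_eq_empty] at hne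
  have hd : Dense Kᶜ := interior_eq_empty_iff_dense_compl.1 hne
  have hopen : IsOpen Kᶜ := hK.isClosed.isOpen_compl
  have hae : ∀ᵐ x, x ∈ Kᶜ → g x = 0 := by
    refine hopen.ae_eq_zero_of_integral_contDiff_smul_eq_zero
      (hgc.locallyIntegrable.locallyIntegrableOn _) ?_
    intro f hf hfc hft
    rw [key f hf hfc]
    have : ∫ x, f x ∂ν = 0 := by
      refine integral_eq_zero_of_ae ?_
      filter_upwards [hνK] with x hx
      by_contra h
      exact hft (subset_tsupport _ h) hx
    rw [this]; simp
  have hz : Set.EqOn g 0 Kᶜ := by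
    have : g =ᵐ[volume.restrict Kᶜ] 0 := (ae_restrict_iff' hopen.measurableSet).2 hae
    exact Measure.eqOn_open_of_ae_eq this hopen hgc.continuousOn continuousOn_const
  have hg0 : g = 0 := Continuous.ext_on hd hgc continuous_const hz
  obtain ⟨R, hR⟩ := hK.isBounded.subset_closedBall 0
  let b : ContDiffBump (0 : E) := ⟨max R 1, max R 1 + 1, by positivity, by linarith⟩
  have hb := key b b.contDiff b.hasCompactSupport
  have h1 : ∫ x, b x ∂ν = 1 := by
    rw [integral_congr_ae (g := fun _ => (1:ℝ))]
    · simp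
    · filter_upwards [hνK] with x hx
      exact b.one_of_mem_closedBall (Metric.closedBall_subset_closedBall (le_max_left _ _) (hR hx))
  rw [h1, hg0] at hb
  simp at hb
section
variable {E : Type*} [NormedAddCommGroup E] [InnerProductSpace ℝ E] [FiniteDimensional ℝ E]
  [MeasurableSpace E] [BorelSpace E] {m : ℕ}

theorem lintegral_weight_gauss_lt_top {s c : ℝ} (hs : 0 ≤ s) (hc : 0 < c) :
    ∫⁻ ξ : E, ENNReal.ofReal ((1 + ‖ξ‖) ^ s * Real.exp (-c * ‖ξ‖ ^ 2)) < ⊤ := by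
  have hI : Integrable (fun ξ : E => Real.exp (s ^ 2 / (2 * c)) * Real.exp (-(c/2) * ‖ξ‖ ^ 2)) := by
    refine Integrable.const_mul ?_ _
    have := (GaussianFourier.integrable_cexp_neg_mul_sq_norm_add (b := ((c / 2 : ℝ) : ℂ))
      (by simpa using hc) 0 (0 : E)).norm
    refine this.congr (Filter.Eventually.of_forall fun v => ?_)
    simp only [Complex.norm_exp]
    congr 1
    simp [← Complex.ofReal_pow]
  refine lt_of_le_of_lt (lintegral_mono fun ξ => ENNReal.ofReal_le_ofReal ?_) hI.lintegral_lt_top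
  have h1 : (1 + ‖ξ‖) ^ s ≤ Real.exp (s * ‖ξ‖) := by
    rw [mul_comm, Real.exp_mul]
    refine Real.rpow_le_rpow (by positivity) ?_ hs
    rw [add_comm]; exact Real.add_one_le_exp _
  calc _ ≤ Real.exp (s * ‖ξ‖) * Real.exp (-c * ‖ξ‖ ^ 2) := by gcongr
    _ ≤ _ := by
      rw [← Real.exp_add, ← Real.exp_add, Real.exp_le_exp]
      have : 0 ≤ (s - c * ‖ξ‖) ^ 2 / (2 * c) := by positivity
      have e : (s - c * ‖ξ‖) ^ 2 / (2 * c) = s ^ 2 / (2 * c) - s * ‖ξ‖ + c / 2 * ‖ξ‖ ^ 2 := by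
        field_simp
        ring
      linarith

theorem lintegral_weight_comp_le {s c B : ℝ} (hs : 0 ≤ s) (A : E →L[ℝ] E)
    (hdet : LinearMap.det (A : E →ₗ[ℝ] E) ≠ 0) (hB : 1 ≤ B) (hA : ∀ ξ, ‖ξ‖ ≤ B * ‖A ξ‖) :
    ∫⁻ ξ : E, ENNReal.ofReal ((1 + ‖ξ‖) ^ s * Real.exp (-c * ‖A ξ‖ ^ 2)) ≤
      ENNReal.ofReal (B ^ s * |LinearMap.det (A : E →ₗ[ℝ] E)|⁻¹) *
        ∫⁻ ξ : E, ENNReal.ofReal ((1 + ‖ξ‖) ^ s * Real.exp (-c * ‖ξ‖ ^ 2)) := by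
  set G : E → ENNReal := fun ξ => ENNReal.ofReal ((1 + ‖ξ‖) ^ s * Real.exp (-c * ‖ξ‖ ^ 2)) with hG
  have hGm : Measurable G := by
    refine (Measurable.mul ?_ ?_).ennreal_ofReal
    · fun_prop
    · fun_prop
  have h1 : ∫⁻ ξ, G (A ξ) = ENNReal.ofReal |LinearMap.det (A : E →ₗ[ℝ] E)|⁻¹ * ∫⁻ ξ, G ξ := by
    have := Measure.map_linearMap_addHaar_eq_smul_addHaar (volume : Measure E) hdet
    rw [← lintegral_map hGm A.continuous.measurable]
    change ∫⁻ ξ, G ξ ∂(Measure.map (A : E →ₗ[ℝ] E) volume) = _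
    rw [this, lintegral_smul_measure, abs_inv]
    rfl
  calc _ ≤ ∫⁻ ξ, ENNReal.ofReal (B ^ s) * G (A ξ) := by
        refine lintegral_mono fun ξ => ?_
        rw [hG, ← ENNReal.ofReal_mul (by positivity)]
        refine ENNReal.ofReal_le_ofReal ?_
        rw [← mul_assoc, ← Real.mul_rpow (by positivity) (by positivity)]
        gcongr
        nlinarith [hA ξ]
    _ = _ := by
      rw [lintegral_const_mul' _ _ ENNReal.ofReal_ne_top, h1,
        ENNReal.ofReal_mul (by positivity), mul_assoc]

theorem word_bound {L : Fin m → E →L[ℝ] E} {β : Fin m → ℝ} (hβ : ∀ i, 1 ≤ β i)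
    (hL : ∀ i ξ, ‖ξ‖ ≤ β i * ‖ContinuousLinearMap.adjoint (L i) ξ‖) (l : List (Fin m)) :
    1 ≤ (l.map β).prod ∧
    ∀ ξ, ‖ξ‖ ≤ (l.map β).prod * ‖ContinuousLinearMap.adjoint (wpL L l) ξ‖ := by
  induction l with
  | nil =>
    rw [wpL_nil, ContinuousLinearMap.adjoint_id]
    simp
  | cons i l ih =>
    refine ⟨?_, fun ξ => ?_⟩
    · simpa using one_le_mul_of_one_le_of_one_le (hβ i) ih.1
    · rw [wpL_cons, ContinuousLinearMap.adjoint_comp, List.map_cons, List.prod_cons, mul_assoc]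
      exact (hL i ξ).trans (mul_le_mul_of_nonneg_left (ih.2 _) (by linarith [hβ i]))

theorem word_det {L : Fin m → E →L[ℝ] E} (l : List (Fin m)) :
    LinearMap.det (ContinuousLinearMap.adjoint (wpL L l) : E →ₗ[ℝ] E) =
      (l.map fun i => LinearMap.det (ContinuousLinearMap.adjoint (L i) : E →ₗ[ℝ] E)).prod := by
  induction l with
  | nil =>
    rw [wpL_nil, ContinuousLinearMap.adjoint_id]
    simp
  | cons i l ih =>
    rw [wpL_cons, ContinuousLinearMap.adjoint_comp, List.map_cons, List.prod_cons, ← ih, mul_comm,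
      ← LinearMap.det_comp]
    rfl

theorem word_lintegral_le {s c : ℝ} (hs : 0 ≤ s) {L : Fin m → E →L[ℝ] E} {β : Fin m → ℝ}
    (hβ : ∀ i, 1 ≤ β i)
    (hL : ∀ i ξ, ‖ξ‖ ≤ β i * ‖ContinuousLinearMap.adjoint (L i) ξ‖)
    (hdet : ∀ i, LinearMap.det (ContinuousLinearMap.adjoint (L i) : E →ₗ[ℝ] E) ≠ 0)
    {n : ℕ} (w : Fin n → Fin m) :
    ∫⁻ ξ : E, ENNReal.ofReal ((1 + ‖ξ‖) ^ s *
        Real.exp (-c * ‖ContinuousLinearMap.adjoint (wpL L (List.ofFn w)) ξ‖ ^ 2)) ≤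
      (∏ k, ENNReal.ofReal (β (w k) ^ s *
        |LinearMap.det (ContinuousLinearMap.adjoint (L (w k)) : E →ₗ[ℝ] E)|⁻¹)) *
        ∫⁻ ξ : E, ENNReal.ofReal ((1 + ‖ξ‖) ^ s * Real.exp (-c * ‖ξ‖ ^ 2)) := by
  have hb := word_bound hβ hL (List.ofFn w)
  have hd := word_det (L := L) (List.ofFn w)
  rw [List.map_ofFn, List.prod_ofFn] at hb hd
  refine (lintegral_weight_comp_le hs _ ?_ hb.1 hb.2).trans (le_of_eq ?_)
  · rw [hd]; exact Finset.prod_ne_zero_iff.2 fun k _ => hdet _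
  · rw [hd]
    congr 1
    rw [← ENNReal.ofReal_prod_of_nonneg]
    · congr 1
      rw [Finset.prod_mul_distrib, Finset.abs_prod, Finset.prod_inv_distrib,
        ← Real.finsetProd_rpow]
      · rfl
      · intro k _; exact zero_le_one.trans (hβ (w k))
    · intro k _
      have := hβ (w k)
      positivity
end
section
variable {E : Type*} [NormedAddCommGroup E] [InnerProductSpace ℝ E] [FiniteDimensional ℝ E]
  [MeasurableSpace E] [BorelSpace E]
  {V : Type*} [NormedAddCommGroup V] [InnerProductSpace ℝ V] [FiniteDimensional ℝ V]
  [MeasurableSpace V] [BorelSpace V]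

/-- unnormalised Gaussian measure -/
noncomputable def gaussM (V : Type*) [NormedAddCommGroup V] [InnerProductSpace ℝ V]
    [FiniteDimensional ℝ V] [MeasurableSpace V] [BorelSpace V] : Measure V :=
  (volume : Measure V).withDensity fun v => ENNReal.ofReal (Real.exp (-‖v‖ ^ 2))

theorem gaussM_exp (u : V) : ∫ v, Complex.exp ((inner ℝ v u : ℝ) * Complex.I) ∂(gaussM V) =
    ((Real.pi ^ (Module.finrank ℝ V / 2 : ℝ) * Real.exp (-‖u‖ ^ 2 / 4) : ℝ) : ℂ) := by
  rw [gaussM, integral_withDensity_eq_integral_toReal_smul (by fun_prop) (by simp)]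
  have := GaussianFourier.integral_cexp_neg_mul_sq_norm_add (b := 1) (by simp) Complex.I u
  simp only [Complex.I_sq] at this
  convert! this using 1
  · congr 1
    ext v
    rw [ENNReal.toReal_ofReal (Real.exp_pos _).le, Complex.real_smul, Complex.ofReal_exp,
      ← Complex.exp_add, real_inner_comm]
    congr 1
    push_cast
    ring
  · push_cast
    rw [Complex.ofReal_cpow Real.pi_pos.le]
    push_cast
    congr 3 <;> simp

instance : IsFiniteMeasure (gaussM V) := by
  refine isFiniteMeasure_withDensity_ofReal ?_
  have := (GaussianFourier.integrable_cexp_neg_mul_sq_norm_add (b := 1)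
      (by simp) 0 (0 : V)).norm
  have : Integrable (fun v : V => Real.exp (-‖v‖ ^ 2)) := by
    refine this.congr (Filter.Eventually.of_forall fun v => ?_)
    simp only [Complex.norm_exp]
    congr 1
    simp [← Complex.ofReal_pow]
  exact this.2

theorem volume_ac_gaussM : (volume : Measure V) ≪ gaussM V :=
  withDensity_absolutelyContinuous' (by fun_prop) (Filter.Eventually.of_forall fun v => by
    simp [Real.exp_pos])

variable {X : Type*} [TopologicalSpace X] [MeasurableSpace X] [BorelSpace X]
  [SecondCountableTopology X]

/-- characteristic function of the projected measure -/
noncomputable def Phi (F : X → V →L[ℝ] E) (μ : Measure X) (a : V) (ξ : E) : ℂ :=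
  ∫ x, Complex.exp ((inner ℝ (F x a) ξ : ℝ) * Complex.I) ∂μ

theorem Phi_sq {F : X → V →L[ℝ] E} (μ : Measure X) [IsProbabilityMeasure μ] (a : V) (ξ : E) :
    ((‖Phi F μ a ξ‖ ^ 2 : ℝ) : ℂ) = ∫ z : X × X, Complex.exp ((inner ℝ a
      (ContinuousLinearMap.adjoint (F z.1 - F z.2) ξ) : ℝ) * Complex.I) ∂(μ.prod μ) := by
  have h := Complex.mul_conj' (Phi F μ a ξ)
  push_cast
  rw [← h, Phi, ← integral_conj, ← integral_prod_mul]
  congr 1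
  ext z
  rw [← Complex.exp_conj, ← Complex.exp_add, ContinuousLinearMap.adjoint_inner_right]
  congr 1
  simp [inner_sub_left]
  ring

theorem second_moment {F : X → V →L[ℝ] E} (hF : Continuous F) (μ : Measure X)
    [IsProbabilityMeasure μ] (ξ : E) :
    ∫⁻ a, ENNReal.ofReal (‖Phi F μ a ξ‖ ^ 2) ∂(gaussM V) ≤
      ENNReal.ofReal (Real.pi ^ (Module.finrank ℝ V / 2 : ℝ)) * ∫⁻ z : X × X, ENNReal.ofReal
        (Real.exp (-‖ContinuousLinearMap.adjoint (F z.1 - F z.2) ξ‖ ^ 2 / 4)) ∂(μ.prod μ) := by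
  set C0 := Real.pi ^ (Module.finrank ℝ V / 2 : ℝ) with hC0
  have hC0p : 0 ≤ C0 := by positivity
  have hcont : Continuous fun p : V × (X × X) => Complex.exp ((inner ℝ p.1
      (ContinuousLinearMap.adjoint (F p.2.1 - F p.2.2) ξ) : ℝ) * Complex.I) := by
    simp only [ContinuousLinearMap.adjoint_inner_right]
    fun_prop
  have hint : Integrable (fun p : V × (X × X) => Complex.exp ((inner ℝ p.1
      (ContinuousLinearMap.adjoint (F p.2.1 - F p.2.2) ξ) : ℝ) * Complex.I))
      ((gaussM V).prod (μ.prod μ)) := by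
    refine Integrable.of_bound hcont.aestronglyMeasurable 1 (Filter.Eventually.of_forall fun p => ?_)
    rw [Complex.norm_exp_ofReal_mul_I]
  have hsw := integral_integral_swap (f := fun (a : V) (z : X × X) => Complex.exp ((inner ℝ a
      (ContinuousLinearMap.adjoint (F z.1 - F z.2) ξ) : ℝ) * Complex.I)) hint
  simp only [gaussM_exp, ← Phi_sq] at hsw
  rw [integral_complex_ofReal, integral_complex_ofReal] at hsw
  have hsw' := Complex.ofReal_injective hsw
  have hi1 : Integrable (fun a => ‖Phi F μ a ξ‖ ^ 2) (gaussM V) := by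
    have := hint.integral_prod_left.re
    refine this.congr (Filter.Eventually.of_forall fun a => ?_)
    have e := congrArg Complex.re (Phi_sq (F := F) μ a ξ)
    rw [Complex.ofReal_re] at e
    exact e.symm
  have hadj : Continuous fun z : X × X => ContinuousLinearMap.adjoint (F z.1 - F z.2) ξ := by
    have : Continuous fun z : X × X => ContinuousLinearMap.adjoint (F z.1 - F z.2) :=
      (LinearIsometryEquiv.continuous _).comp (by fun_prop)
    fun_prop
  rw [← ofReal_integral_eq_lintegral_ofReal hi1 (Filter.Eventually.of_forall fun a => by positivity),
    hsw', integral_const_mul, ENNReal.ofReal_mul hC0p, ofReal_integral_eq_lintegral_ofReal]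
  · refine Integrable.of_bound (Continuous.aestronglyMeasurable (by fun_prop)) 1
      (Filter.Eventually.of_forall fun p => ?_)
    rw [Real.norm_eq_abs, Real.abs_exp, Real.exp_le_one_iff]
    have := sq_nonneg ‖ContinuousLinearMap.adjoint (F p.1 - F p.2) ξ‖
    linarith
  · exact Filter.Eventually.of_forall fun a => by positivity

theorem measurable_Phi {F : X → V →L[ℝ] E} (hF : Continuous F) (μ : Measure X)
    [IsProbabilityMeasure μ] : Measurable fun p : V × E => Phi F μ p.1 p.2 := by
  have hcont : Continuous fun p : (V × E) × X =>
      Complex.exp ((inner ℝ (F p.2 p.1.1) p.1.2 : ℝ) * Complex.I) := by fun_prop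
  exact (hcont.stronglyMeasurable.integral_prod_right (ν := μ)).measurable

/-- finite weighted energy gives integrability a.e. -/
theorem ae_integrable_Phi {F : X → V →L[ℝ] E} (hF : Continuous F) (μ : Measure X)
    [IsProbabilityMeasure μ] {s : ℝ} (hs : (Module.finrank ℝ E : ℝ) < s)
    (hfin : ∫⁻ ξ : E, ENNReal.ofReal ((1 + ‖ξ‖) ^ s) * ∫⁻ z : X × X, ENNReal.ofReal
        (Real.exp (-‖ContinuousLinearMap.adjoint (F z.1 - F z.2) ξ‖ ^ 2 / 4)) ∂(μ.prod μ) < ⊤) :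
    ∀ᵐ a ∂(volume : Measure V), Integrable (Phi F μ a) := by
  refine volume_ac_gaussM.ae_le ?_
  have hm := measurable_Phi hF μ
  have hw : Measurable fun ξ : E => ENNReal.ofReal ((1 + ‖ξ‖) ^ s) := by fun_prop
  have hmm : Measurable fun p : V × E =>
      ENNReal.ofReal ((1 + ‖p.2‖) ^ s) * ENNReal.ofReal (‖Phi F μ p.1 p.2‖ ^ 2) :=
    (hw.comp measurable_snd).mul (hm.norm.pow_const 2).ennreal_ofReal
  have h1 : ∫⁻ a, (∫⁻ ξ : E, ENNReal.ofReal ((1 + ‖ξ‖) ^ s) *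
      ENNReal.ofReal (‖Phi F μ a ξ‖ ^ 2)) ∂(gaussM V) < ⊤ := by
    rw [lintegral_lintegral_swap hmm.aemeasurable]
    have h2 : ∀ ξ : E, ∫⁻ a, ENNReal.ofReal ((1 + ‖ξ‖) ^ s) *
        ENNReal.ofReal (‖Phi F μ a ξ‖ ^ 2) ∂(gaussM V) ≤
        ENNReal.ofReal (Real.pi ^ (Module.finrank ℝ V / 2 : ℝ)) *
        (ENNReal.ofReal ((1 + ‖ξ‖) ^ s) * ∫⁻ z : X × X, ENNReal.ofReal
        (Real.exp (-‖ContinuousLinearMap.adjoint (F z.1 - F z.2) ξ‖ ^ 2 / 4)) ∂(μ.prod μ)) := by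
      intro ξ
      rw [lintegral_const_mul' _ _ ENNReal.ofReal_ne_top, mul_left_comm]
      exact mul_le_mul_right (second_moment hF μ ξ) _
    refine (lintegral_mono h2).trans_lt ?_
    rw [lintegral_const_mul' _ _ ENNReal.ofReal_ne_top]
    exact ENNReal.mul_lt_top ENNReal.ofReal_lt_top hfin
  have h3 := ae_lt_top (hmm.lintegral_prod_right') h1.ne
  filter_upwards [h3] with a ha
  have hma : Measurable (Phi F μ a) := hm.comp (measurable_prodMk_left (x := a))
  refine ⟨hma.aestronglyMeasurable, ?_⟩
  have h4 := (integrable_one_add_norm (μ := (volume : Measure E)) hs).lintegral_lt_top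
  refine lt_of_le_of_lt ?_ (ENNReal.add_lt_top.2 ⟨ha, h4⟩)
  have hma2 : Measurable fun ξ : E =>
      ENNReal.ofReal ((1 + ‖ξ‖) ^ s) * ENNReal.ofReal (‖Phi F μ a ξ‖ ^ 2) :=
    hw.mul (hma.norm.pow_const 2).ennreal_ofReal
  rw [← lintegral_add_left hma2]
  refine lintegral_mono fun ξ => ?_
  rw [← ofReal_norm_eq_enorm, ← ENNReal.ofReal_mul (by positivity), ← ENNReal.ofReal_add
    (by positivity) (by positivity)]
  refine ENNReal.ofReal_le_ofReal ?_
  have hp : 0 < (1 + ‖ξ‖) ^ s := by positivity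
  rw [Real.rpow_neg (by positivity)]
  set W := (1 + ‖ξ‖) ^ s
  set t := ‖Phi F μ a ξ‖
  have ht : 0 ≤ t := norm_nonneg _
  have : W * t ^ 2 + W⁻¹ - t = (W * t - 1) ^ 2 / W + t := by field_simp; ring
  have : 0 ≤ (W * t - 1) ^ 2 / W := by positivity
  linarith
end
section
variable {m : ℕ}

/-- cylinder sets -/
def cyl {n : ℕ} (w : Fin n → Fin m) : Set (ℕ → Fin m) := {x | ∀ k : Fin n, x k = w k}

theorem cyl_eq {n : ℕ} (w : Fin n → Fin m) :
    cyl w = Set.pi (Finset.range n) (fun k => if h : k < n then {w ⟨k, h⟩} else Set.univ) := by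
  ext x
  simp only [cyl, Set.mem_setOf_eq, Set.mem_pi, Finset.coe_range, Set.mem_Iio]
  constructor
  · intro h k hk
    simp [hk, h ⟨k, hk⟩]
  · intro h k
    have := h k k.2
    simpa using this

theorem measurableSet_cyl {n : ℕ} (w : Fin n → Fin m) : MeasurableSet (cyl w) := by
  have : cyl w = ⋂ k : Fin n, (fun x : ℕ → Fin m => x k) ⁻¹' {w k} := by
    ext x; simp [cyl]
  rw [this]
  exact MeasurableSet.iInter fun k => (measurable_pi_apply _) (measurableSet_singleton _)

theorem measure_cyl (p : PMF (Fin m)) {n : ℕ} (w : Fin n → Fin m) :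
    Measure.infinitePi (fun _ : ℕ => p.toMeasure) (cyl w) = ∏ k, p (w k) := by
  rw [cyl_eq, Measure.infinitePi_pi, Finset.prod_range]
  · refine Finset.prod_congr rfl fun k _ => ?_
    simp [PMF.toMeasure_apply_singleton]
  · intro i _; exact MeasurableSet.of_discrete

variable {E : Type*} [NormedAddCommGroup E] [InnerProductSpace ℝ E] [FiniteDimensional ℝ E]
  {V : Type*} [NormedAddCommGroup V] [InnerProductSpace ℝ V] [FiniteDimensional ℝ V]

theorem pointwise_bound {L : Fin m → E →L[ℝ] E} {ρ : ℝ} (hρ : ∀ i, ‖L i‖ ≤ ρ)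
    {P : Fin m → V →L[ℝ] E} (hP : ∀ i, ‖P i‖ ≤ 1) (h0 : 0 ≤ ρ) (h1 : ρ < 1 / 2)
    (hV : ∀ i j, i ≠ j → ∀ η : E, ∃ v : V, P i v = η ∧ P j v = -η ∧ (∀ k, ‖P k v‖ ≤ ‖η‖) ∧
      ‖v‖ ^ 2 = 2 * ‖η‖ ^ 2) {c : ℝ} (hc : c = ((1 - 2 * ρ) / (1 - ρ)) ^ 2 / 2)
    (z : (ℕ → Fin m) × (ℕ → Fin m)) (ξ : E) :
    ENNReal.ofReal (Real.exp (-‖ContinuousLinearMap.adjoint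
        (codeOp L P z.1 - codeOp L P z.2) ξ‖ ^ 2 / 4)) ≤
      ∑' n : ℕ, ∑ w : Fin n → Fin m, (cyl w ×ˢ cyl w).indicator (fun _ => (1 : ENNReal)) z *
        ENNReal.ofReal (Real.exp (-c *
          ‖ContinuousLinearMap.adjoint (wpL L (List.ofFn w)) ξ‖ ^ 2)) := by
  obtain ⟨x, y⟩ := z
  have hc0 : 0 ≤ c := by rw [hc]; positivity
  have hterm : ∀ n, (∀ k < n, x k = y k) → ENNReal.ofReal (Real.exp (-c *
          ‖ContinuousLinearMap.adjoint (wpL L (pre x n)) ξ‖ ^ 2)) ≤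
      ∑ w : Fin n → Fin m, (cyl w ×ˢ cyl w).indicator (fun _ => (1 : ENNReal)) (x, y) *
        ENNReal.ofReal (Real.exp (-c *
          ‖ContinuousLinearMap.adjoint (wpL L (List.ofFn w)) ξ‖ ^ 2)) := by
    intro n hn
    refine le_trans (le_of_eq ?_) (Finset.single_le_sum (fun _ _ => zero_le)
      (Finset.mem_univ (fun k : Fin n => x k)))
    have : (x, y) ∈ cyl (fun k : Fin n => x k) ×ˢ cyl (fun k : Fin n => x k) :=
      ⟨fun k => rfl, fun k => (hn k k.2).symm⟩
    rw [Set.indicator_of_mem this, one_mul]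
    rfl
  by_cases hxy : x = y
  · subst hxy
    have hlow : ∀ n, ENNReal.ofReal (Real.exp (-c * ‖ξ‖ ^ 2)) ≤
      ∑ w : Fin n → Fin m, (cyl w ×ˢ cyl w).indicator (fun _ => (1 : ENNReal)) (x, x) *
        ENNReal.ofReal (Real.exp (-c *
          ‖ContinuousLinearMap.adjoint (wpL L (List.ofFn w)) ξ‖ ^ 2)) := by
      intro n
      refine le_trans (ENNReal.ofReal_le_ofReal (Real.exp_le_exp.2 ?_)) (hterm n fun _ _ => rfl)
      have h2 : ‖ContinuousLinearMap.adjoint (wpL L (pre x n)) ξ‖ ≤ ‖ξ‖ := by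
        refine (ContinuousLinearMap.le_opNorm _ _).trans ?_
        rw [LinearIsometryEquiv.norm_map]
        have h3 := (norm_wpL_le hρ (pre x n)).trans (pow_le_one₀ h0 (by linarith))
        nlinarith [norm_nonneg ξ]
      have h4 := pow_le_pow_left₀ (norm_nonneg _) h2 2
      nlinarith
    refine le_trans le_top (le_trans (le_of_eq ?_) (ENNReal.tsum_le_tsum hlow))
    rw [ENNReal.tsum_const_eq_top_of_ne_zero]
    simp [Real.exp_pos]
  · have hex : ∃ n, x n ≠ y n := by
      by_contra h; push Not at h; exact hxy (funext h)
    classical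
    have hn := Nat.find_spec hex
    have hlt : ∀ k < Nat.find hex, x k = y k := fun k hk => not_not.1 (Nat.find_min hex hk)
    set n := Nat.find hex
    refine le_trans (le_trans ?_ (hterm n hlt)) (ENNReal.le_tsum n)
    refine ENNReal.ofReal_le_ofReal (Real.exp_le_exp.2 ?_)
    rw [codeOp_sub hρ hP h0 (by linarith) n x y hlt, ContinuousLinearMap.adjoint_comp]
    have := codeOp_lower hρ hP h0 h1 hV (fun k => x (k+n)) (fun k => y (k+n)) (by simpa using hn)
      (ContinuousLinearMap.adjoint (wpL L (pre x n)) ξ)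
    rw [hc, ContinuousLinearMap.comp_apply]
    linarith

variable [MeasurableSpace E] [BorelSpace E]

theorem energy_finite {L : Fin m → E →L[ℝ] E} {ρ : ℝ} (hρ : ∀ i, ‖L i‖ ≤ ρ)
    {P : Fin m → V →L[ℝ] E} (hP : ∀ i, ‖P i‖ ≤ 1) (h0 : 0 ≤ ρ) (h1 : ρ < 1 / 2)
    (hV : ∀ i j, i ≠ j → ∀ η : E, ∃ v : V, P i v = η ∧ P j v = -η ∧ (∀ k, ‖P k v‖ ≤ ‖η‖) ∧
      ‖v‖ ^ 2 = 2 * ‖η‖ ^ 2)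
    (p : PMF (Fin m)) {s : ℝ} (hs : 0 ≤ s) {β : Fin m → ℝ}
    (hβ : ∀ i, 1 ≤ β i)
    (hL : ∀ i ξ, ‖ξ‖ ≤ β i * ‖ContinuousLinearMap.adjoint (L i) ξ‖)
    (hdet : ∀ i, LinearMap.det (ContinuousLinearMap.adjoint (L i) : E →ₗ[ℝ] E) ≠ 0)
    (hsum : ∑ i, p i ^ 2 * ENNReal.ofReal (β i ^ s *
        |LinearMap.det (ContinuousLinearMap.adjoint (L i) : E →ₗ[ℝ] E)|⁻¹) < 1) :
    ∫⁻ ξ : E, ENNReal.ofReal ((1 + ‖ξ‖) ^ s) * ∫⁻ z, ENNReal.ofReal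
        (Real.exp (-‖ContinuousLinearMap.adjoint (codeOp L P z.1 - codeOp L P z.2) ξ‖ ^ 2 / 4))
        ∂((Measure.infinitePi (fun _ : ℕ => p.toMeasure)).prod
          (Measure.infinitePi (fun _ : ℕ => p.toMeasure))) < ⊤ := by
  set μ := Measure.infinitePi (fun _ : ℕ => p.toMeasure) with hμ
  set c : ℝ := ((1 - 2 * ρ) / (1 - ρ)) ^ 2 / 2 with hc
  have hcpos : 0 < c := by
    have : 0 < (1 - 2 * ρ) / (1 - ρ) := div_pos (by linarith) (by linarith)
    positivity
  set R : Fin m → ENNReal := fun i => ENNReal.ofReal (β i ^ s *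
        |LinearMap.det (ContinuousLinearMap.adjoint (L i) : E →ₗ[ℝ] E)|⁻¹) with hR
  set C := ∫⁻ ξ : E, ENNReal.ofReal ((1 + ‖ξ‖) ^ s * Real.exp (-c * ‖ξ‖ ^ 2)) with hC
  have hCt : C < ⊤ := lintegral_weight_gauss_lt_top hs hcpos
  have hmeas : ∀ {n : ℕ} (w : Fin n → Fin m), Measurable fun ξ : E => ENNReal.ofReal (Real.exp (-c *
          ‖ContinuousLinearMap.adjoint (wpL L (List.ofFn w)) ξ‖ ^ 2)) := by
    intro n w
    fun_prop
  have hmz : ∀ {n : ℕ} (w : Fin n → Fin m), MeasurableSet (cyl w ×ˢ cyl w) := fun w =>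
    (measurableSet_cyl w).prod (measurableSet_cyl w)
  have hin : ∀ ξ : E, ∫⁻ z, ENNReal.ofReal
        (Real.exp (-‖ContinuousLinearMap.adjoint (codeOp L P z.1 - codeOp L P z.2) ξ‖ ^ 2 / 4))
        ∂(μ.prod μ) ≤ ∑' n : ℕ, ∑ w : Fin n → Fin m, (∏ k, p (w k)) ^ 2 *
          ENNReal.ofReal (Real.exp (-c *
          ‖ContinuousLinearMap.adjoint (wpL L (List.ofFn w)) ξ‖ ^ 2)) := by
    intro ξ
    refine (lintegral_mono fun z => pointwise_bound hρ hP h0 h1 hV hc z ξ).trans (le_of_eq ?_)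
    rw [lintegral_tsum]
    · refine tsum_congr fun n => ?_
      rw [lintegral_finsetSum]
      · refine Finset.sum_congr rfl fun w _ => ?_
        rw [lintegral_mul_const' _ _ ENNReal.ofReal_ne_top, lintegral_indicator (hmz w)]
        simp only [lintegral_const, one_mul, Measure.restrict_apply_univ]
        rw [Measure.prod_prod, hμ, measure_cyl, ← sq]
      · intro w _
        exact (measurable_const.indicator (hmz w)).mul_const _
    · intro n
      refine (Finset.measurable_sum _ fun w _ => ?_).aemeasurable
      exact (measurable_const.indicator (hmz w)).mul_const _
  have hw : Measurable fun ξ : E => ENNReal.ofReal ((1 + ‖ξ‖) ^ s) := by fun_prop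
  have hwm : ∀ {n : ℕ} (w : Fin n → Fin m), Measurable fun ξ : E =>
      ENNReal.ofReal ((1 + ‖ξ‖) ^ s) * ENNReal.ofReal (Real.exp (-c *
          ‖ContinuousLinearMap.adjoint (wpL L (List.ofFn w)) ξ‖ ^ 2)) := fun w => hw.mul (hmeas w)
  calc _ ≤ ∫⁻ ξ : E, ∑' n : ℕ, ∑ w : Fin n → Fin m, (∏ k, p (w k)) ^ 2 *
          (ENNReal.ofReal ((1 + ‖ξ‖) ^ s) * ENNReal.ofReal (Real.exp (-c *
          ‖ContinuousLinearMap.adjoint (wpL L (List.ofFn w)) ξ‖ ^ 2))) := by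
        refine lintegral_mono fun ξ => (mul_le_mul_right (hin ξ) _).trans (le_of_eq ?_)
        rw [← ENNReal.tsum_mul_left]
        refine tsum_congr fun n => ?_
        rw [Finset.mul_sum]
        exact Finset.sum_congr rfl fun w _ => mul_left_comm _ _ _
    _ = ∑' n : ℕ, ∑ w : Fin n → Fin m, (∏ k, p (w k)) ^ 2 *
          ∫⁻ ξ : E, ENNReal.ofReal ((1 + ‖ξ‖) ^ s * Real.exp (-c *
          ‖ContinuousLinearMap.adjoint (wpL L (List.ofFn w)) ξ‖ ^ 2)) := by
        rw [lintegral_tsum]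
        · refine tsum_congr fun n => ?_
          rw [lintegral_finsetSum]
          · refine Finset.sum_congr rfl fun w _ => ?_
            rw [lintegral_const_mul _ (hwm w)]
            congr 1
            refine lintegral_congr fun ξ => ?_
            rw [ENNReal.ofReal_mul (by positivity)]
          · intro w _
            exact (hwm w).const_mul _
        · intro n
          refine (Finset.measurable_sum _ fun w _ => ?_).aemeasurable
          exact (hwm w).const_mul _
    _ ≤ ∑' n : ℕ, (∑ i, p i ^ 2 * R i) ^ n * C := by
        refine ENNReal.tsum_le_tsum fun n => ?_
        rw [Fintype.sum_pow, Finset.sum_mul]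
        refine Finset.sum_le_sum fun w _ => ?_
        rw [Finset.prod_mul_distrib, Finset.prod_pow, mul_assoc]
        exact mul_le_mul_right (word_lintegral_le hs hβ hL hdet w) _
    _ < ⊤ := by
        rw [ENNReal.tsum_mul_right, ENNReal.tsum_geometric]
        refine ENNReal.mul_lt_top ?_ hCt
        rw [ENNReal.inv_lt_top]
        exact tsub_pos_of_lt hsum
end
section
variable {m : ℕ} {E : Type*} [NormedAddCommGroup E] [InnerProductSpace ℝ E] [FiniteDimensional ℝ E]
  {V : Type*} [NormedAddCommGroup V] [InnerProductSpace ℝ V] [FiniteDimensional ℝ V]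
  [MeasurableSpace E] [BorelSpace E] [MeasurableSpace V] [BorelSpace V]

theorem abstract_main {L : Fin m → E →L[ℝ] E} {ρ : ℝ} (hρ : ∀ i, ‖L i‖ ≤ ρ)
    {P : Fin m → V →L[ℝ] E} (hP : ∀ i, ‖P i‖ ≤ 1) (h0 : 0 ≤ ρ) (h1 : ρ < 1 / 2)
    (hV : ∀ i j, i ≠ j → ∀ η : E, ∃ v : V, P i v = η ∧ P j v = -η ∧ (∀ k, ‖P k v‖ ≤ ‖η‖) ∧
      ‖v‖ ^ 2 = 2 * ‖η‖ ^ 2)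
    (p : PMF (Fin m)) {s : ℝ} (hs : (Module.finrank ℝ E : ℝ) < s) {β : Fin m → ℝ}
    (hβ : ∀ i, 1 ≤ β i)
    (hL : ∀ i ξ, ‖ξ‖ ≤ β i * ‖ContinuousLinearMap.adjoint (L i) ξ‖)
    (hdet : ∀ i, LinearMap.det (ContinuousLinearMap.adjoint (L i) : E →ₗ[ℝ] E) ≠ 0)
    (hsum : ∑ i, p i ^ 2 * ENNReal.ofReal (β i ^ s *
        |LinearMap.det (ContinuousLinearMap.adjoint (L i) : E →ₗ[ℝ] E)|⁻¹) < 1) :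
    ∀ᵐ a ∂(volume : Measure V), (interior (Set.range fun x => codeOp L P x a)).Nonempty := by
  have hs0 : 0 ≤ s := le_trans (Nat.cast_nonneg _) hs.le
  have hF : Continuous (codeOp L P) := continuous_codeOp hρ hP h0 (by linarith)
  have hen := energy_finite hρ hP h0 h1 hV p hs0 hβ hL hdet hsum
  set μ := Measure.infinitePi (fun _ : ℕ => p.toMeasure) with hμ
  filter_upwards [ae_integrable_Phi hF μ hs hen] with a ha
  have hca : Continuous fun x => codeOp L P x a := by fun_prop
  have hm : AEMeasurable (fun x => codeOp L P x a) μ := hca.measurable.aemeasurable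
  have : IsProbabilityMeasure (μ.map fun x => codeOp L P x a) := Measure.isProbabilityMeasure_map hm
  refine interior_nonempty_of_integrable_charFun (μ.map fun x => codeOp L P x a) ?_ _
    (isCompact_range hca) ?_
  · refine ha.congr (Filter.Eventually.of_forall fun ξ => ?_)
    rw [charFun_apply, integral_map hm (Continuous.aestronglyMeasurable (by fun_prop))]
    rfl
  · exact (ae_map_iff hm (p := fun y => y ∈ Set.range fun x => codeOp L P x a)
      (isCompact_range hca).measurableSet).2 (Filter.Eventually.of_forall fun x => ⟨x, rfl⟩)

theorem exists_test_vec (i j : Fin m) (hij : i ≠ j) (η : E) : ∃ v : PiLp 2 (fun _ : Fin m => E),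
    v i = η ∧ v j = -η ∧ (∀ k, ‖v k‖ ≤ ‖η‖) ∧ ‖v‖ ^ 2 = 2 * ‖η‖ ^ 2 := by
  let v : PiLp 2 (fun _ : Fin m => E) :=
    WithLp.toLp 2 (Function.update (Function.update (fun _ => 0) i η) j (-η))
  have hvx : v i = η := by simp [v, hij]
  have hvy : v j = -η := by simp [v]
  have hvz : ∀ k, k ≠ i → k ≠ j → v k = 0 := by
    intro k h h'; simp [v, h, h']
  refine ⟨v, hvx, hvy, fun k => ?_, ?_⟩
  · by_cases h : k = i
    · subst h; rw [hvx]
    by_cases h' : k = j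
    · subst h'; rw [hvy, norm_neg]
    rw [hvz k h h']; simp
  · rw [PiLp.norm_sq_eq_of_L2, Fintype.sum_eq_add i j hij, hvx, hvy, norm_neg]
    · ring
    · rintro k ⟨h, h'⟩; rw [hvz k h h']; simp

/-- a.e. transfer between `PiLp` and the plain product -/
theorem ae_transfer {Q : (Fin m → E) → Prop}
    (h : ∀ᵐ v ∂(volume : Measure (PiLp 2 (fun _ : Fin m => E))), Q (WithLp.ofLp v)) :
    ∀ᵐ a ∂(volume : Measure (Fin m → E)), Q a := by
  let e := (PiLp.continuousLinearEquiv 2 ℝ (fun _ : Fin m => E)).symm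
  have hH : (Measure.map e (volume : Measure (Fin m → E))).IsAddHaarMeasure :=
    ContinuousLinearEquiv.isAddHaarMeasure_map e _
  have hac : Measure.map e (volume : Measure (Fin m → E)) ≪
      (volume : Measure (PiLp 2 (fun _ : Fin m => E))) :=
    Measure.absolutelyContinuous_isAddHaarMeasure _ _
  have h2 := hac.ae_le h
  exact ae_of_ae_map e.continuous.measurable.aemeasurable h2

theorem norm_proj_le (i : Fin m) : ‖PiLp.proj (𝕜 := ℝ) 2 (fun _ : Fin m => E) i‖ ≤ 1 := by
  refine ContinuousLinearMap.opNorm_le_bound _ zero_le_one fun v => ?_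
  simpa using PiLp.norm_apply_le v i

theorem abstract_main' {L : Fin m → E →L[ℝ] E} {ρ : ℝ} (hρ : ∀ i, ‖L i‖ ≤ ρ)
    (h0 : 0 ≤ ρ) (h1 : ρ < 1 / 2)
    (p : PMF (Fin m)) {s : ℝ} (hs : (Module.finrank ℝ E : ℝ) < s) {β : Fin m → ℝ}
    (hβ : ∀ i, 1 ≤ β i)
    (hL : ∀ i ξ, ‖ξ‖ ≤ β i * ‖ContinuousLinearMap.adjoint (L i) ξ‖)
    (hdet : ∀ i, LinearMap.det (ContinuousLinearMap.adjoint (L i) : E →ₗ[ℝ] E) ≠ 0)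
    (hsum : ∑ i, p i ^ 2 * ENNReal.ofReal (β i ^ s *
        |LinearMap.det (ContinuousLinearMap.adjoint (L i) : E →ₗ[ℝ] E)|⁻¹) < 1) :
    ∀ᵐ a ∂(volume : Measure (Fin m → E)),
      (interior (Set.range fun x : ℕ → Fin m =>
        ∑' n : ℕ, wpL L (pre x n) (a (x n)))).Nonempty := by
  refine ae_transfer ?_
  have hP : ∀ i : Fin m, ‖PiLp.proj (𝕜 := ℝ) 2 (fun _ : Fin m => E) i‖ ≤ 1 := norm_proj_le
  filter_upwards [abstract_main (V := PiLp 2 (fun _ : Fin m => E)) (L := L) hρ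
    (P := fun i => PiLp.proj (𝕜 := ℝ) 2 (fun _ : Fin m => E) i) hP h0 h1
    (fun i j hij η => exists_test_vec i j hij η) p hs hβ hL hdet hsum] with v hv
  have : (fun x : ℕ → Fin m => ∑' n : ℕ, wpL L (pre x n) (WithLp.ofLp v (x n))) =
      fun x => codeOp L (fun i => PiLp.proj (𝕜 := ℝ) 2 (fun _ : Fin m => E) i) x v := by
    ext1 x
    exact (codeOp_apply hρ hP h0 (by linarith) x v).tsum_eq
  rw [this]
  exact hv
end
section
variable {d m : ℕ}

theorem codingMap_eq (T : Fin m → Matrix (Fin d) (Fin d) ℝ)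
    (a : Fin m → EuclideanSpace ℝ (Fin d)) (x : ℕ → Fin m) :
    codingMap T a x =
      ∑' n : ℕ, wpL (fun i => Matrix.toEuclideanCLM (𝕜 := ℝ) (T i)) (pre x n) (a (x n)) := by
  unfold codingMap
  congr 1
  ext1 n
  congr 1
  rw [wordProd, wpL, pre, map_list_prod, List.map_ofFn, List.map_ofFn]
  rfl

theorem adjoint_toCLM (A : Matrix (Fin d) (Fin d) ℝ) :
    ContinuousLinearMap.adjoint (Matrix.toEuclideanCLM (𝕜 := ℝ) A) =
      Matrix.toEuclideanCLM (𝕜 := ℝ) (star A) := by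
  rw [map_star]; rfl

theorem det_adjoint_toCLM (A : Matrix (Fin d) (Fin d) ℝ) :
    LinearMap.det (ContinuousLinearMap.adjoint (Matrix.toEuclideanCLM (𝕜 := ℝ) A) :
      EuclideanSpace ℝ (Fin d) →ₗ[ℝ] EuclideanSpace ℝ (Fin d)) = A.det := by
  rw [adjoint_toCLM, Matrix.coe_toEuclideanCLM_eq_toEuclideanLin, LinearMap.det_toLpLin,
    Matrix.star_eq_conjTranspose, Matrix.det_conjTranspose]
  simp

theorem adjoint_lower (A : Matrix (Fin d) (Fin d) ℝ) (hA : IsUnit A.det)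
    (ξ : EuclideanSpace ℝ (Fin d)) :
    ‖ξ‖ ≤ opNorm A⁻¹ * ‖ContinuousLinearMap.adjoint (Matrix.toEuclideanCLM (𝕜 := ℝ) A) ξ‖ := by
  have h : ContinuousLinearMap.adjoint (Matrix.toEuclideanCLM (𝕜 := ℝ) A⁻¹)
      (ContinuousLinearMap.adjoint (Matrix.toEuclideanCLM (𝕜 := ℝ) A) ξ) = ξ := by
    rw [adjoint_toCLM, adjoint_toCLM, ← ContinuousLinearMap.mul_apply, ← map_mul, ← star_mul,
      Matrix.mul_nonsing_inv _ hA, star_one, map_one]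
    rfl
  calc ‖ξ‖ = _ := by rw [← h]
    _ ≤ ‖ContinuousLinearMap.adjoint (Matrix.toEuclideanCLM (𝕜 := ℝ) A⁻¹)‖ * _ :=
      ContinuousLinearMap.le_opNorm _ _
    _ = _ := by
      rw [LinearIsometryEquiv.norm_map]; rfl

theorem one_le_opNorm_inv (hd : d ≠ 0) (A : Matrix (Fin d) (Fin d) ℝ) (hA : IsUnit A.det)
    (hn : opNorm A < 1 / 2) : 1 ≤ opNorm A⁻¹ := by
  have : Nonempty (Fin d) := ⟨⟨0, Nat.pos_of_ne_zero hd⟩⟩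
  have h1 : (1 : ℝ) ≤ opNorm A * opNorm A⁻¹ := by
    have h := norm_mul_le (Matrix.toEuclideanCLM (𝕜 := ℝ) A) (Matrix.toEuclideanCLM (𝕜 := ℝ) A⁻¹)
    rw [← map_mul, Matrix.mul_nonsing_inv _ hA, map_one, norm_one] at h
    exact h
  have h2 : 0 ≤ opNorm A⁻¹ := norm_nonneg _
  nlinarith

/-- choice of an exponent slightly larger than the dimension -/
theorem exists_eps {q β : Fin m → ℝ} (hβ : ∀ i, 1 ≤ β i) (hS : 1 < ∑ i, q i) :
    ∃ ε > 0, ∑ i, q i * β i ^ (ε : ℝ) < (∑ i, q i) ^ 2 := by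
  have hc : Continuous fun ε : ℝ => ∑ i, q i * β i ^ ε := by
    refine continuous_finsetSum _ fun i _ => continuous_const.mul ?_
    exact continuous_const.rpow continuous_id fun _ => Or.inl (by linarith [hβ i])
  have h0 : (fun ε : ℝ => ∑ i, q i * β i ^ ε) 0 < (∑ i, q i) ^ 2 := by
    simp only [Real.rpow_zero, mul_one]; nlinarith
  have hev : ∀ᶠ ε in nhdsWithin (0 : ℝ) (Set.Ioi 0), ∑ i, q i * β i ^ ε < (∑ i, q i) ^ 2 :=
    nhdsWithin_le_nhds ((hc.tendsto 0).eventually (gt_mem_nhds h0))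
  obtain ⟨ε, h1, h2⟩ := (hev.and self_mem_nhdsWithin).exists
  exact ⟨ε, h2, h1⟩
end

end Helpers

/-- **Corollary 1.2(i).** If `‖T_i‖ < 1/2` for all `i` and
`∑_i α_d(T_i)^d |det T_i| > 1`, then for Lebesgue-a.e. `a ∈ ℝ^{md}` the self-affine set
`K^a` has non-empty interior. -/
theorem typical_selfAffine_nonempty_interior_of_sum_alpha_det_gt_one
    (T : Fin m → Matrix (Fin d) (Fin d) ℝ)
    (hinv : ∀ i, IsUnit (T i).det)
    (hnorm : ∀ i, opNorm (T i) < 1 / 2)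
    (hsum : 1 < ∑ i : Fin m, alphaMin (T i) ^ d * |(T i).det|) :
    ∀ᵐ a ∂(volume : Measure (Fin m → EuclideanSpace ℝ (Fin d))),
      (interior (attractor T a)).Nonempty := by
  have hm : Nonempty (Fin m) := by
    by_contra h
    rw [not_nonempty_iff] at h
    simp at hsum
    linarith
  by_cases hd : d = 0
  · subst hd
    refine Filter.Eventually.of_forall fun a => ?_
    have : attractor T a = Set.univ :=
      Subsingleton.eq_univ_of_nonempty (Set.range_nonempty _)
    rw [this, interior_univ]
    exact Set.univ_nonempty
  obtain ⟨i₀, hi₀⟩ := Finite.exists_max fun i => opNorm (T i)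
  have hβ : ∀ i, 1 ≤ opNorm (T i)⁻¹ := fun i => one_le_opNorm_inv hd _ (hinv i) (hnorm i)
  have hdet : ∀ i, 0 < |(T i).det| := fun i => abs_pos.2 (hinv i).ne_zero
  set q : Fin m → ℝ := fun i => alphaMin (T i) ^ d * |(T i).det| with hq
  have hq0 : ∀ i, 0 < q i := fun i =>
    mul_pos (pow_pos (inv_pos.2 (by linarith [hβ i])) _) (hdet i)
  set S := ∑ i, q i with hS
  have hS0 : 0 < S := by linarith
  obtain ⟨ε, hε, hεS⟩ := exists_eps hβ hsum
  have hpsum : ∑ i, ENNReal.ofReal (q i / S) = 1 := by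
    rw [← ENNReal.ofReal_sum_of_nonneg fun i _ => (div_pos (hq0 i) hS0).le, ← Finset.sum_div,
      div_self hS0.ne', ENNReal.ofReal_one]
  have key := abstract_main' (L := fun i => Matrix.toEuclideanCLM (𝕜 := ℝ) (T i))
    (ρ := opNorm (T i₀)) hi₀ (norm_nonneg _) (hnorm i₀)
    (PMF.ofFintype (fun i => ENNReal.ofReal (q i / S)) hpsum) (s := d + ε)
    (by rw [finrank_euclideanSpace_fin]; linarith) hβ (fun i ξ => adjoint_lower _ (hinv i) ξ)
    (fun i => by rw [det_adjoint_toCLM]; exact (hinv i).ne_zero) (by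
      have hterm : ∀ i, (PMF.ofFintype (fun i => ENNReal.ofReal (q i / S)) hpsum) i ^ 2 *
          ENNReal.ofReal (opNorm (T i)⁻¹ ^ ((d : ℝ) + ε) *
            |LinearMap.det (ContinuousLinearMap.adjoint (Matrix.toEuclideanCLM (𝕜 := ℝ) (T i)) :
              EuclideanSpace ℝ (Fin d) →ₗ[ℝ] EuclideanSpace ℝ (Fin d))|⁻¹) =
          ENNReal.ofReal (q i * opNorm (T i)⁻¹ ^ ε / S ^ 2) := by
        intro i
        have hb : 0 < opNorm (T i)⁻¹ := by linarith [hβ i]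
        have hD := hdet i
        rw [det_adjoint_toCLM, PMF.ofFintype_apply,
          ← ENNReal.ofReal_pow (div_pos (hq0 i) hS0).le,
          ← ENNReal.ofReal_mul (pow_nonneg (div_pos (hq0 i) hS0).le _)]
        congr 1
        rw [Real.rpow_add hb, Real.rpow_natCast]
        simp only [hq, alphaMin, inv_pow]
        field_simp
      rw [Finset.sum_congr rfl fun i _ => hterm i, ← ENNReal.ofReal_sum_of_nonneg,
        ← Finset.sum_div]
      · rw [← ENNReal.ofReal_one, ENNReal.ofReal_lt_ofReal_iff one_pos,
          div_lt_one (pow_pos hS0 2)]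
        exact hεS
      · intro i _
        exact div_nonneg (mul_nonneg (hq0 i).le (Real.rpow_nonneg (norm_nonneg _) _))
          (pow_nonneg hS0.le 2))
  filter_upwards [key] with a ha
  have : attractor T a = Set.range fun x : ℕ → Fin m =>
      ∑' n : ℕ, wpL (fun i => Matrix.toEuclideanCLM (𝕜 := ℝ) (T i)) (pre x n) (a (x n)) := by
    rw [attractor]
    congr 1
    ext1 x
    exact codingMap_eq T a x
  rw [this]
  exact ha

end SelfAffine
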